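/- The union of σ-rational lines is dense in ℝ². -/

import Mathlib

open Set

noncomputable section

def hmap (σ : ℝ ≃ ℝ) : (ℝ × ℝ) ≃ (ℝ × ℝ) where
  toFun p := (p.1 + σ.symm p.2, p.2)
  invFun p := (p.1 - σ.symm p.2, p.2)
  left_inv p := by simp
  right_inv p := by simp

def vmap (σ : ℝ ≃ ℝ) : (ℝ × ℝ) ≃ (ℝ × ℝ) where
  toFun p := (p.1, p.2 + σ p.1)
  invFun p := (p.1, p.2 - σ p.1)
  left_inv p := by simp
  right_inv p := by simp

def Xset : Set (ℝ × ℝ) := {p | p ≠ 0 ∧ 0 ≤ p.1 * p.2 ∧ p.1 ≠ 0}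
def Yset : Set (ℝ × ℝ) := {p | p ≠ 0 ∧ p.1 * p.2 ≤ 0 ∧ p.2 ≠ 0}
def Omeg : Set (ℝ × ℝ) := {p | p ≠ 0}

def ratLines (σ : ℝ ≃ ℝ) : Set (Set (ℝ × ℝ)) :=
  {{p : ℝ × ℝ | p.2 = 0}, {p : ℝ × ℝ | p.1 = 0}} ∪
  ((fun w : Function.End (ℝ × ℝ) => w '' {p : ℝ × ℝ | p.2 = 0}) ''
    ↑(Submonoid.closure {(⇑(hmap σ) : Function.End (ℝ × ℝ)), ⇑(vmap σ)} : Submonoid (Function.End (ℝ × ℝ)))) ∪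
  ((fun w : Function.End (ℝ × ℝ) => w '' {p : ℝ × ℝ | p.1 = 0}) ''
    ↑(Submonoid.closure {(⇑(hmap σ).symm : Function.End (ℝ × ℝ)), ⇑(vmap σ).symm} : Submonoid (Function.End (ℝ × ℝ))))

/-!
Let `L` be a set containing the graph of `σ` and stable under `h_σ` and `v_σ`, and let `C` be a
connected set in the open first quadrant that misses `L`. Then `C` lies strictly on one side of the
graph, so that `v_σ⁻¹` (above the graph) or `h_σ⁻¹` (below it) carries `C` to another such set: this
is a Euclidean algorithm on `C`. If `C` had two points `p`, `q` with `q` not to the right of `p` and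
at least `δ > 0` higher, then so would all its successors, and their upper points would lose at
least `σ⁻¹ δ` of abscissa at each application of `h_σ⁻¹`; between two of these, only finitely many
`v_σ⁻¹` are possible, so the algorithm would have to stop, which it cannot. In particular `C` is not
a vertical segment, hence `L` is dense in the first quadrant. The images of `Ox` under the monoid of
`h_σ` and `v_σ`, their reflections through the origin, and the reflections in `Oy` of the images of
`Oy` under the inverse maps are such sets `L`.
-/

open Function

theorem strictMono_equiv_symm {α β : Type*} [LinearOrder α] [Preorder β] {e : α ≃ β}
    (he : StrictMono e) : StrictMono e.symm :=
  fun a b hab => he.lt_iff_lt.1 (by simpa using hab)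

theorem continuous_equiv_of_strictMono {α β : Type*} [LinearOrder α] [TopologicalSpace α]
    [OrderTopology α] [PartialOrder β] [TopologicalSpace β] [OrderTopology β] {e : α ≃ β}
    (he : StrictMono e) : Continuous e :=
  (he.orderIsoOfSurjective e e.surjective).continuous

theorem odd_equiv_symm {α β : Type*} [Neg α] [InvolutiveNeg β] {e : α ≃ β} (he : Function.Odd e) :
    Function.Odd e.symm :=
  fun b => by rw [Equiv.symm_apply_eq, he, Equiv.apply_symm_apply]

theorem isPreconnected_preimage_equiv {α β : Type*} [TopologicalSpace α] [TopologicalSpace β]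
    {e : α ≃ β} {s : Set β} (hs : IsPreconnected s) (he : Continuous e.symm) :
    IsPreconnected (e ⁻¹' s) :=
  e.image_symm_eq_preimage s ▸ hs.image e.symm he.continuousOn

/-- The union of the images of `A` under the monoid of self-maps generated by `S`. -/
def monoidOrbit {α : Type*} (S : Set (Function.End α)) (A : Set α) : Set α :=
  ⋃ w ∈ Submonoid.closure S, w '' A

theorem subset_monoidOrbit {α : Type*} (S : Set (Function.End α)) (A : Set α) :
    A ⊆ monoidOrbit S A :=
  fun a ha => mem_biUnion (one_mem (Submonoid.closure S)) ⟨a, ha, rfl⟩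

theorem mapsTo_monoidOrbit {α : Type*} {S : Set (Function.End α)} {f : Function.End α}
    (hf : f ∈ S) (A : Set α) : MapsTo f (monoidOrbit S A) (monoidOrbit S A) := by
  intro p hp
  obtain ⟨w, hw, a, ha, rfl⟩ := mem_iUnion₂.1 hp
  exact mem_biUnion (mul_mem (Submonoid.subset_closure hf) hw) ⟨a, ha, rfl⟩

/-- The union of the first family of σ-rational lines: the images of `Ox` under the monoid
generated by `h_σ` and `v_σ`. -/
def xAxisOrbit (σ : ℝ ≃ ℝ) : Set (ℝ × ℝ) :=
  monoidOrbit {⇑(hmap σ), ⇑(vmap σ)} {p | p.2 = 0}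

/-- The union of the second family of σ-rational lines: the images of `Oy` under the monoid
generated by `h_σ⁻¹` and `v_σ⁻¹`. -/
def yAxisOrbit (σ : ℝ ≃ ℝ) : Set (ℝ × ℝ) :=
  monoidOrbit {⇑(hmap σ).symm, ⇑(vmap σ).symm} {p | p.1 = 0}

theorem sUnion_ratLines (σ : ℝ ≃ ℝ) :
    ⋃₀ ratLines σ = {p | p.2 = 0} ∪ {p | p.1 = 0} ∪ xAxisOrbit σ ∪ yAxisOrbit σ := by
  simp only [ratLines, xAxisOrbit, yAxisOrbit, monoidOrbit, sUnion_union, sUnion_pair, sUnion_image,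
    SetLike.mem_coe]

section

variable {σ : ℝ ≃ ℝ} {L C : Set (ℝ × ℝ)}

/-- `L` contains the graph of `σ` and is stable under both shears `h_σ` and `v_σ`. The graph is the
first image of either axis, so these are the properties shared by the two families of σ-rational
lines, once the second one is reflected in `Oy`. -/
structure IsShearInvariant (σ : ℝ ≃ ℝ) (L : Set (ℝ × ℝ)) : Prop where
  graph_mem (x : ℝ) : (x, σ x) ∈ L
  mapsTo_hmap : MapsTo (hmap σ) L L
  mapsTo_vmap : MapsTo (vmap σ) L L

/-- A connected set (possibly empty) in the open first quadrant that avoids `L`. -/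
structure IsGap (L C : Set (ℝ × ℝ)) : Prop where
  isPreconnected : IsPreconnected C
  fst_pos : ∀ p ∈ C, 0 < p.1
  snd_pos : ∀ p ∈ C, 0 < p.2
  disjoint : Disjoint C L

theorem continuous_hmap_symm (hσ : StrictMono σ) : Continuous (hmap σ).symm := by
  have hσc : Continuous σ.symm := continuous_equiv_of_strictMono (strictMono_equiv_symm hσ)
  change Continuous fun p : ℝ × ℝ => (p.1 - σ.symm p.2, p.2)
  fun_prop

theorem continuous_vmap_symm (hσ : StrictMono σ) : Continuous (vmap σ).symm := by
  have hσc : Continuous σ := continuous_equiv_of_strictMono hσ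
  change Continuous fun p : ℝ × ℝ => (p.1, p.2 - σ p.1)
  fun_prop

theorem vmap_iterate_apply (σ : ℝ ≃ ℝ) (k : ℕ) (p : ℝ × ℝ) :
    (vmap σ)^[k] p = (p.1, p.2 + k * σ p.1) := by
  induction k with
  | zero => simp
  | succ k ih =>
    rw [iterate_succ_apply', ih]
    simp only [vmap, Equiv.coe_fn_mk, Nat.cast_succ, Prod.mk.injEq, true_and]
    ring

theorem IsGap.below_or_above (hC : IsGap L C) (hL : IsShearInvariant σ L) (hσ : StrictMono σ) :
    (∀ p ∈ C, p.2 < σ p.1) ∨ ∀ p ∈ C, σ p.1 < p.2 := by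
  have hσc : Continuous σ := continuous_equiv_of_strictMono hσ
  by_contra! ⟨⟨p, hp, hp_above⟩, ⟨q, hq, hq_below⟩⟩
  obtain ⟨r, hr, hr_graph⟩ : ∃ r ∈ C, σ r.1 = r.2 :=
    hC.isPreconnected.intermediate_value₂ hp hq (by fun_prop) (by fun_prop) hp_above hq_below
  have hr_mem : r ∈ L := by simpa only [hr_graph] using hL.graph_mem r.1
  exact hC.disjoint.notMem_of_mem_left hr hr_mem

theorem IsGap.preimage_vmap (hC : IsGap L C) (hL : IsShearInvariant σ L) (hσ : StrictMono σ)
    (h_above : ∀ p ∈ C, σ p.1 < p.2) : IsGap L (vmap σ ⁻¹' C) where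
  isPreconnected := isPreconnected_preimage_equiv hC.isPreconnected (continuous_vmap_symm hσ)
  fst_pos p hp := hC.fst_pos (vmap σ p) hp
  snd_pos _ hp := pos_of_lt_add_left (h_above _ hp)
  disjoint := disjoint_left.2 fun _ hp hpL =>
    hC.disjoint.notMem_of_mem_left hp (hL.mapsTo_vmap hpL)

theorem IsGap.preimage_hmap (hC : IsGap L C) (hL : IsShearInvariant σ L) (hσ : StrictMono σ)
    (h_below : ∀ p ∈ C, p.2 < σ p.1) : IsGap L (hmap σ ⁻¹' C) where
  isPreconnected := isPreconnected_preimage_equiv hC.isPreconnected (continuous_hmap_symm hσ)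
  fst_pos p hp := by
    have h_lt : σ.symm p.2 < p.1 + σ.symm p.2 := by
      simpa [hmap] using strictMono_equiv_symm hσ (h_below _ hp)
    exact pos_of_lt_add_left h_lt
  snd_pos p hp := hC.snd_pos (hmap σ p) hp
  disjoint := disjoint_left.2 fun _ hp hpL =>
    hC.disjoint.notMem_of_mem_left hp (hL.mapsTo_hmap hpL)

theorem IsGap.exists_preimage_vmap_iterate_below (hC : IsGap L C) (hL : IsShearInvariant σ L)
    (hσ : StrictMono σ) (h0 : σ 0 = 0) (hne : C.Nonempty) :
    ∃ k : ℕ, IsGap L ((vmap σ)^[k] ⁻¹' C) ∧ ∀ p ∈ (vmap σ)^[k] ⁻¹' C, p.2 < σ p.1 := by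
  obtain ⟨q, hq⟩ := hne
  have hσq : 0 < σ q.1 := h0 ▸ hσ (hC.fst_pos q hq)
  obtain ⟨M, hM⟩ := exists_nat_gt (q.2 / σ q.1)
  rw [div_lt_iff₀ hσq] at hM
  induction M generalizing C q with
  | zero =>
    rw [Nat.cast_zero, zero_mul] at hM
    exact absurd hM (hC.snd_pos q hq).not_gt
  | succ M ih =>
    rcases hC.below_or_above hL hσ with h_below | h_above
    · exact ⟨0, hC, h_below⟩
    · obtain ⟨k, hk⟩ := ih (hC.preimage_vmap hL hσ h_above) ((vmap σ).symm q)
        (by simpa using hq) hσq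
        (by push_cast at hM; simp only [vmap, Equiv.coe_fn_symm_mk]; linarith)
      exact ⟨k + 1, by rwa [iterate_succ', preimage_comp]⟩

theorem IsGap.snd_lt_add (hL : IsShearInvariant σ L) (hσ : StrictMono σ) (h0 : σ 0 = 0) {δ : ℝ}
    (hδ : 0 < δ) {N : ℕ} (hC : IsGap L C) {p q : ℝ × ℝ} (hp : p ∈ C) (hq : q ∈ C) (hqp : q.1 ≤ p.1)
    (hN : q.1 < N * σ.symm δ) : q.2 < p.2 + δ := by
  induction N generalizing C p q with
  | zero =>
    rw [Nat.cast_zero, zero_mul] at hN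
    exact absurd hN (hC.fst_pos q hq).not_gt
  | succ N ih =>
    by_contra! h_high
    obtain ⟨k, hCk, h_below⟩ := hC.exists_preimage_vmap_iterate_below hL hσ h0 ⟨q, hq⟩
    have lower_mem {r : ℝ × ℝ} (hr : r ∈ C) : (r.1, r.2 - k * σ r.1) ∈ (vmap σ)^[k] ⁻¹' C := by
      simpa [vmap_iterate_apply] using hr
    set y := p.2 - k * σ p.1
    set z := q.2 - k * σ q.1
    have hy : 0 < y := hCk.snd_pos _ (lower_mem hp)
    have hyz : y + δ ≤ z := by
      have : k * σ q.1 ≤ k * σ p.1 := by gcongr; exact hσ.monotone hqp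
      linarith
    have hσ' : StrictMono σ.symm := strictMono_equiv_symm hσ
    have h_symm_yz : σ.symm y ≤ σ.symm z := hσ'.monotone (by linarith)
    have h_symm_δ : σ.symm δ ≤ σ.symm z := hσ'.monotone (by linarith)
    have : z < y + δ := ih (hCk.preimage_hmap hL hσ h_below)
      (p := (hmap σ).symm (p.1, y)) (q := (hmap σ).symm (q.1, z))
      (by simpa using lower_mem hp) (by simpa using lower_mem hq)
      (sub_le_sub hqp h_symm_yz)
      (by push_cast at hN; simp only [hmap, Equiv.coe_fn_symm_mk]; linarith)
    exact this.not_ge hyz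

theorem IsGap.snd_le_snd (hC : IsGap L C) (hL : IsShearInvariant σ L) (hσ : StrictMono σ)
    (h0 : σ 0 = 0) {p q : ℝ × ℝ} (hp : p ∈ C) (hq : q ∈ C) (hqp : q.1 ≤ p.1) : q.2 ≤ p.2 := by
  by_contra! hlt
  have hδ : 0 < q.2 - p.2 := sub_pos.2 hlt
  have h_symm_pos : 0 < σ.symm (q.2 - p.2) := by
    rw [← hσ.lt_iff_lt, h0, Equiv.apply_symm_apply]
    exact hδ
  obtain ⟨N, hN⟩ := exists_nat_gt (q.1 / σ.symm (q.2 - p.2))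
  have := hC.snd_lt_add hL hσ h0 hδ hp hq hqp ((div_lt_iff₀ h_symm_pos).1 hN)
  linarith

namespace IsShearInvariant

theorem exists_mem_vertical_segment (hL : IsShearInvariant σ L) (hσ : StrictMono σ) (h0 : σ 0 = 0)
    {x y z : ℝ} (hx : 0 < x) (hy : 0 < y) (hyz : y < z) : ∃ t ∈ Icc y z, (x, t) ∈ L := by
  by_contra! h_avoid
  have h_gap : IsGap L (Prod.mk x '' Icc y z) :=
    { isPreconnected := isPreconnected_Icc.image _ (by fun_prop)
      fst_pos := by rintro _ ⟨t, -, rfl⟩; exact hx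
      snd_pos := by rintro _ ⟨t, ht, rfl⟩; exact hy.trans_le ht.1
      disjoint := disjoint_left.2 (by rintro _ ⟨t, ht, rfl⟩; exact h_avoid t ht) }
  have : z ≤ y := h_gap.snd_le_snd hL hσ h0 (mem_image_of_mem _ (left_mem_Icc.2 hyz.le))
    (mem_image_of_mem _ (right_mem_Icc.2 hyz.le)) le_rfl
  exact this.not_gt hyz

theorem mem_closure_of_pos (hL : IsShearInvariant σ L) (hσ : StrictMono σ) (h0 : σ 0 = 0)
    {x y : ℝ} (hx : 0 < x) (hy : 0 < y) : (x, y) ∈ closure L := by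
  refine Metric.mem_closure_iff.2 fun ε hε => ?_
  obtain ⟨t, ht, htL⟩ :=
    hL.exists_mem_vertical_segment hσ h0 hx hy (lt_add_of_pos_right y (half_pos hε))
  refine ⟨(x, t), htL, ?_⟩
  rw [dist_prod_same_left, dist_comm, Real.dist_eq, abs_of_nonneg (sub_nonneg.2 ht.1)]
  linarith [ht.2]

theorem preimage_neg (hL : IsShearInvariant σ L) (hodd : Function.Odd σ) :
    IsShearInvariant σ (Neg.neg ⁻¹' L) where
  graph_mem x := by simpa [hodd x] using hL.graph_mem (-x)
  mapsTo_hmap p hp := by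
    simpa [hmap, odd_equiv_symm hodd p.2, add_comm] using hL.mapsTo_hmap hp
  mapsTo_vmap p hp := by simpa [vmap, hodd p.1, add_comm] using hL.mapsTo_vmap hp

theorem mem_closure_of_mul_pos (hL : IsShearInvariant σ L) (hσ : StrictMono σ)
    (hodd : Function.Odd σ) {p : ℝ × ℝ} (hp : 0 < p.1 * p.2) : p ∈ closure L := by
  rcases mul_pos_iff.1 hp with ⟨hx, hy⟩ | ⟨hx, hy⟩
  · exact hL.mem_closure_of_pos hσ hodd.map_zero hx hy
  · have h_neg : -p ∈ closure (Neg.neg ⁻¹' L) :=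
      (hL.preimage_neg hodd).mem_closure_of_pos hσ hodd.map_zero (neg_pos.2 hx) (neg_pos.2 hy)
    simpa using map_mem_closure continuous_neg h_neg (mapsTo_preimage _ _)

end IsShearInvariant

theorem isShearInvariant_xAxisOrbit (σ : ℝ ≃ ℝ) : IsShearInvariant σ (xAxisOrbit σ) := by
  have h_mapsTo : MapsTo (hmap σ) (xAxisOrbit σ) (xAxisOrbit σ) :=
    mapsTo_monoidOrbit (mem_insert _ _) _
  have v_mapsTo : MapsTo (vmap σ) (xAxisOrbit σ) (xAxisOrbit σ) :=
    mapsTo_monoidOrbit (mem_insert_of_mem _ (mem_singleton _)) _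
  have mem_of_xAxis (x : ℝ) : (x, 0) ∈ xAxisOrbit σ := subset_monoidOrbit _ _ rfl
  exact
    { graph_mem x := by simpa [vmap] using v_mapsTo (mem_of_xAxis x)
      mapsTo_hmap := h_mapsTo
      mapsTo_vmap := v_mapsTo }

theorem isShearInvariant_reflect_yAxisOrbit (hodd : Function.Odd σ) :
    IsShearInvariant σ ((fun p : ℝ × ℝ => (-p.1, p.2)) ⁻¹' yAxisOrbit σ) := by
  have h_mapsTo : MapsTo (hmap σ).symm (yAxisOrbit σ) (yAxisOrbit σ) :=
    mapsTo_monoidOrbit (mem_insert _ _) _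
  have v_mapsTo : MapsTo (vmap σ).symm (yAxisOrbit σ) (yAxisOrbit σ) :=
    mapsTo_monoidOrbit (mem_insert_of_mem _ (mem_singleton _)) _
  have mem_of_yAxis (y : ℝ) : (0, y) ∈ yAxisOrbit σ := subset_monoidOrbit _ _ rfl
  exact
    { graph_mem x := by simpa [hmap] using h_mapsTo (mem_of_yAxis (σ x))
      mapsTo_hmap p hp := by simpa [hmap, sub_eq_add_neg, add_comm] using h_mapsTo hp
      mapsTo_vmap p hp := by simpa [vmap, hodd p.1] using v_mapsTo hp }

theorem mem_closure_xAxisOrbit (hσ : StrictMono σ) (hodd : Function.Odd σ) {p : ℝ × ℝ}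
    (hp : 0 < p.1 * p.2) : p ∈ closure (xAxisOrbit σ) :=
  (isShearInvariant_xAxisOrbit σ).mem_closure_of_mul_pos hσ hodd hp

theorem mem_closure_yAxisOrbit (hσ : StrictMono σ) (hodd : Function.Odd σ) {p : ℝ × ℝ}
    (hp : p.1 * p.2 < 0) : p ∈ closure (yAxisOrbit σ) := by
  set reflect : ℝ × ℝ → ℝ × ℝ := fun p => (-p.1, p.2)
  have h_continuous : Continuous reflect := by fun_prop
  have h_reflect : reflect p ∈ closure (reflect ⁻¹' yAxisOrbit σ) :=
    (isShearInvariant_reflect_yAxisOrbit hodd).mem_closure_of_mul_pos hσ hodd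
      (by simpa [reflect] using hp)
  simpa [reflect] using map_mem_closure h_continuous h_reflect (mapsTo_preimage _ _)

end

/-- The union of the σ-rational lines is dense in ℝ². -/
theorem stmt_6 (σ : ℝ ≃ ℝ) (hmono : StrictMono σ) (hodd : ∀ x : ℝ, σ (-x) = -σ x) :
    Dense (⋃₀ ratLines σ) := by
  rw [sUnion_ratLines]
  intro p
  rcases lt_trichotomy (p.1 * p.2) 0 with h_neg | h_zero | h_pos
  · exact closure_mono subset_union_right (mem_closure_yAxisOrbit hmono hodd h_neg)
  · have h_axes : p.2 = 0 ∨ p.1 = 0 := (mul_eq_zero.1 h_zero).symm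
    exact subset_closure (.inl (.inl h_axes))
  · exact closure_mono (subset_union_right.trans subset_union_left)
      (mem_closure_xAxisOrbit hmono hodd h_pos)
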